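/- arXiv:math/0408026 — 2 statements merged into one kernel-verified Lean document; each statement's English description precedes it below -/
import Mathlib

section
/- If a and b lie at distances r ≥ 1 and s ≥ 1 along opposite rays from p (so the angle ∠apb = π), then any rectifiable arc from a to b avoiding the open unit ball B(p) has length at least f(r)+f(s), where f(x) = sqrt(x²-1)+arcsin(1/x). -/
open Real Set

noncomputable def f (r : ℝ) : ℝ := Real.sqrt (r^2 - 1) + Real.arcsin (1/r)

noncomputable def g (r : ℝ) : ℝ :=
  if r ≤ 2 then 2*Real.pi - 2*Real.arcsin (r/2) else Real.pi

noncomputable def m (r s θ : ℝ) : ℝ :=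
  if θ ≤ Real.arccos (1/r) + Real.arccos (1/s) then
    Real.sqrt (r^2 + s^2 - 2*r*s*Real.cos θ)
  else f r + f s + (θ - Real.pi)

abbrev E3 := EuclideanSpace ℝ (Fin 3)

/-- A set `K` has thickness at least 1 (thickness = twice infimal circumradius over
triples of distinct points) iff no three distinct points of `K` lie on a common
sphere of radius less than `1/2`. -/
def ThickOne (K : Set E3) : Prop :=
  ∀ x ∈ K, ∀ y ∈ K, ∀ z ∈ K, x ≠ y → y ≠ z → x ≠ z →
    ∀ (c : E3) (ρ : ℝ), dist x c = ρ → dist y c = ρ → dist z c = ρ → 1/2 ≤ ρ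


lemma cos_aux {x y : ℝ} (hx : 0 ≤ x) (hxy : x ≤ y) (hy : y ≤ π / 2) :
    Real.cos x - Real.cos y ≤ (y - x) * Real.sin y := by
  have h1 : Real.cos x - Real.cos y = 2 * Real.sin ((y + x) / 2) * Real.sin ((y - x) / 2) := by
    rw [Real.cos_sub_cos, show (x - y) / 2 = -((y - x) / 2) by ring, Real.sin_neg, add_comm x y]
    ring
  have h2 : Real.sin ((y + x) / 2) ≤ Real.sin y :=
    Real.sin_le_sin_of_le_of_le_pi_div_two (by linarith [Real.pi_pos]) hy (by linarith)
  have h3 : Real.sin ((y - x) / 2) ≤ (y - x) / 2 := Real.sin_le (by linarith)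
  have h4 : 0 ≤ Real.sin ((y - x) / 2) :=
    Real.sin_nonneg_of_nonneg_of_le_pi (by linarith) (by linarith [Real.pi_pos])
  have h5 : 0 ≤ Real.sin y :=
    Real.sin_nonneg_of_nonneg_of_le_pi (by linarith) (by linarith [Real.pi_pos])
  rw [h1]
  nlinarith [mul_le_mul h2 h3 h4 h5]

/-- The calibrating radial function for the ball of radius `c`. -/
noncomputable def hh (c x : ℝ) : ℝ := Real.sqrt (x ^ 2 - c ^ 2) + c * Real.arcsin (c / x)

lemma hh_param {c x : ℝ} (hc : 0 < c) (hx : c ≤ x) :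
    ∃ β : ℝ, 0 ≤ β ∧ β ≤ π / 2 ∧ x * Real.sin β = c ∧
      hh c x = x * (Real.cos β + β * Real.sin β) ∧ β = Real.arcsin (c / x) := by
  have hx0 : 0 < x := lt_of_lt_of_le hc hx
  have h1 : c / x ≤ 1 := (div_le_one hx0).2 hx
  have h0 : 0 ≤ c / x := by positivity
  have hsin : Real.sin (Real.arcsin (c / x)) = c / x := Real.sin_arcsin (by linarith) h1
  have hxs : x * Real.sin (Real.arcsin (c / x)) = c := by rw [hsin]; field_simp
  refine ⟨Real.arcsin (c / x), Real.arcsin_nonneg.2 h0, Real.arcsin_le_pi_div_two _, hxs, ?_, rfl⟩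
  have hcos : Real.sqrt (x ^ 2 - c ^ 2) = x * Real.cos (Real.arcsin (c / x)) := by
    rw [Real.cos_arcsin, ← Real.sqrt_sq hx0.le, ← Real.sqrt_mul (by positivity),
      Real.sqrt_sq hx0.le]
    congr 1
    field_simp
  unfold hh
  rw [hcos]
  linear_combination (-Real.arcsin (c / x)) * hxs

lemma hh_step {c x y : ℝ} (hc : 0 < c) (hx : c ≤ x) (hxy : x ≤ y) :
    hh c y - hh c x ≤ (y - x) * Real.sqrt (1 - (c / y) ^ 2) := by
  obtain ⟨β, b0, b1, b2, b3, b4⟩ := hh_param hc hx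
  obtain ⟨α, a0, a1, a2, a3, a4⟩ := hh_param hc (hx.trans hxy)
  have hx0 : 0 < x := lt_of_lt_of_le hc hx
  have hab : α ≤ β := by
    rw [a4, b4]
    apply Real.monotone_arcsin
    gcongr
  have := cos_aux a0 hab b1
  rw [← Real.cos_arcsin, ← a4, a3, b3]
  have h2 := mul_le_mul_of_nonneg_left this hx0.le
  have e1 : y * (Real.cos α + α * Real.sin α) = y * Real.cos α + α * c := by
    rw [← a2]; ring
  have e2 : x * (Real.cos β + β * Real.sin β) = x * Real.cos β + β * c := by
    rw [← b2]; ring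
  have e3 : x * ((β - α) * Real.sin β) = (β - α) * c := by rw [← b2]; ring
  rw [e1, e2]
  rw [e3] at h2
  nlinarith

lemma hh_mono_left {c d x : ℝ} (hc : 0 < c) (hcd : c ≤ d) (hx : d ≤ x) : hh c x ≤ hh d x := by
  obtain ⟨β, b0, b1, b2, b3, b4⟩ := hh_param (hc.trans_le hcd) hx
  obtain ⟨α, a0, a1, a2, a3, a4⟩ := hh_param hc (hcd.trans hx)
  have hx0 : 0 < x := lt_of_lt_of_le hc (hcd.trans hx)
  have hab : α ≤ β := by
    rw [a4, b4]
    apply Real.monotone_arcsin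
    gcongr
  have h1 := cos_aux a0 hab b1
  have h2 : Real.sin α ≤ Real.sin β :=
    Real.sin_le_sin_of_le_of_le_pi_div_two (by linarith) b1 hab
  rw [a3, b3]
  apply mul_le_mul_of_nonneg_left _ hx0.le
  nlinarith [mul_le_mul_of_nonneg_left h2 a0]


lemma hh_self {c : ℝ} (hc : 0 < c) : hh c c = c * (π / 2) := by
  simp [hh, div_self hc.ne']

lemma cs_aux {A T k : ℝ} (hk : k ^ 2 ≤ 1) :
    A * Real.sqrt (1 - k ^ 2) + k * T ≤ Real.sqrt (A ^ 2 + T ^ 2) := by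
  apply Real.le_sqrt_of_sq_le
  have h := Real.sq_sqrt (show 0 ≤ 1 - k ^ 2 by linarith)
  set q := Real.sqrt (1 - k ^ 2)
  have : A ^ 2 + T ^ 2 - (A * q + k * T) ^ 2 = (A * k - q * T) ^ 2 := by
    linear_combination (-A ^ 2 - T ^ 2) * h
  nlinarith [sq_nonneg (A * k - q * T)]

lemma hh_mono_right {c x y : ℝ} (hc : 0 < c) (hx : c ≤ x) (hxy : x ≤ y) :
    hh c x ≤ hh c y := by
  obtain ⟨β, b0, b1, b2, b3, b4⟩ := hh_param hc hx
  obtain ⟨α, a0, a1, a2, a3, a4⟩ := hh_param hc (hx.trans hxy)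
  have hx0 : 0 < x := lt_of_lt_of_le hc hx
  have hab : α ≤ β := by
    rw [a4, b4]
    apply Real.monotone_arcsin
    gcongr
  have e1 : y * (Real.cos α + α * Real.sin α) = y * Real.cos α + α * c := by
    rw [← a2]; ring
  have e2 : x * (Real.cos β + β * Real.sin β) = x * Real.cos β + β * c := by
    rw [← b2]; ring
  obtain ⟨d, hd⟩ : ∃ d, d = β - α := ⟨_, rfl⟩
  have hd0 : 0 ≤ d := by linarith
  have hd1 : d < π / 2 := by
    by_contra h
    have : α = 0 := by linarith
    rw [this] at a2
    simp at a2
    linarith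
  have h3 : d * Real.cos d ≤ Real.sin d := by
    have := Real.le_tan hd0 hd1
    have hp : 0 < Real.cos d := Real.cos_pos_of_mem_Ioo ⟨by linarith, hd1⟩
    rwa [Real.tan_eq_sin_div_cos, le_div_iff₀ hp] at this
  have h4 : Real.sin d ≤ Real.cos α := by
    rw [← Real.sin_pi_div_two_sub]
    exact Real.sin_le_sin_of_le_of_le_pi_div_two (by linarith) (by linarith) (by linarith)
  have h5 : Real.sin α ≤ Real.cos d := by
    rw [← Real.sin_pi_div_two_sub]
    exact Real.sin_le_sin_of_le_of_le_pi_div_two (by linarith) (by linarith) (by linarith)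
  have h6 : Real.cos β = Real.cos α * Real.cos d - Real.sin α * Real.sin d := by
    rw [← Real.cos_add]; congr 1; linarith
  have h7 : d * Real.sin α ≤ Real.cos α - Real.cos β := by
    have g1 := mul_le_mul_of_nonneg_right h4 (sub_nonneg.2 (Real.cos_le_one d))
    have g2 := mul_le_mul_of_nonneg_right h5 (sub_nonneg.2 (Real.sin_le hd0))
    rw [h6]
    nlinarith
  have h8 := mul_le_mul_of_nonneg_left h7 (hx0.le.trans hxy)
  have e3 : y * (d * Real.sin α) = (β - α) * c := by rw [← a2, hd]; ring
  have h9 : 0 ≤ Real.cos β := Real.cos_nonneg_of_mem_Icc ⟨by linarith, b1⟩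
  have h10 := mul_le_mul_of_nonneg_right hxy h9
  rw [e3] at h8
  rw [a3, b3, e1, e2]
  nlinarith

lemma local_aux {x y : E3} {c δ : ℝ} (hc : 1 ≤ c) (hx : c ≤ ‖x‖) (hxy : ‖x‖ ≤ ‖y‖)
    (hδ : δ < 1) (hd : ‖x - y‖ ≤ δ) :
    (1 - δ) * (hh c ‖y‖ - hh c ‖x‖ + c * InnerProductGeometry.angle x y)
      ≤ (1 + δ) * ‖x - y‖ := by
  have h1 := hh_step (by linarith) hx hxy
  set θ := InnerProductGeometry.angle x y with hθ
  have hx1 : 1 ≤ ‖x‖ := hc.trans hx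
  have hδ0 : 0 ≤ δ := (norm_nonneg _).trans hd
  have hlaw : ‖x - y‖ ^ 2 = (‖y‖ - ‖x‖) ^ 2 + 4 * ‖x‖ * ‖y‖ * Real.sin (θ / 2) ^ 2 := by
    have e := InnerProductGeometry.norm_sub_sq_eq_norm_sq_add_norm_sq_sub_two_mul_norm_mul_norm_mul_cos_angle x y
    have e2 : Real.cos θ = 1 - 2 * Real.sin (θ / 2) ^ 2 := by
      have := Real.cos_sq' (θ / 2)
      have h3 := Real.cos_two_mul (θ / 2)
      rw [show 2 * (θ / 2) = θ by ring] at h3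
      linarith
    rw [← hθ, e2] at e
    linear_combination e
  set X := ‖x‖
  set Y := ‖y‖
  set D := ‖x - y‖
  have hD0 : 0 ≤ D := norm_nonneg _
  have hY1 : 1 ≤ Y := hx1.trans hxy
  have hθ0 : 0 ≤ θ := InnerProductGeometry.angle_nonneg _ _
  have hθπ : θ ≤ π := InnerProductGeometry.angle_le_pi _ _
  obtain ⟨z, hz⟩ : ∃ z, z = θ / 2 := ⟨_, rfl⟩
  rw [← hz] at hlaw
  have hz0 : 0 ≤ z := by linarith
  have hs0 : 0 ≤ Real.sin z := Real.sin_nonneg_of_nonneg_of_le_pi hz0 (by linarith)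
  have hXY : 1 ≤ X * Y := by nlinarith
  have hYX : Y - X ≤ δ := by
    have : Y - X ≤ D := by
      apply abs_le_of_sq_le_sq' _ hD0 |>.2
      nlinarith [mul_nonneg (by linarith : 0 ≤ X * Y) (sq_nonneg (Real.sin z))]
    linarith
  have h2s : 2 * Real.sin z ≤ δ := by
    have : 2 * Real.sin z ≤ D := by
      apply abs_le_of_sq_le_sq' _ hD0 |>.2
      nlinarith [mul_nonneg (by linarith : 0 ≤ X * Y - 1) (sq_nonneg (Real.sin z)), sq_nonneg (Y - X)]
    linarith
  have hzδ : z ≤ δ := by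
    have h := Real.mul_le_sin hz0 (by linarith)
    have h4 : 1 / 2 ≤ 2 / π := by
      rw [div_le_div_iff₀ (by norm_num) Real.pi_pos]; linarith [Real.pi_le_four]
    nlinarith [mul_le_mul_of_nonneg_right h4 hz0]
  have hzs : (1 - δ) * z ≤ Real.sin z := by
    rcases hz0.eq_or_lt with h | h
    · rw [← h]; simp
    · have := Real.sin_gt_sub_cube h
      have h5 : z ^ 3 / 4 ≤ δ * z := by
        have : z ^ 2 ≤ δ := by nlinarith
        nlinarith
      nlinarith
  have hT : (1 - δ) ^ 2 * ((Y - X) ^ 2 + (Y * θ) ^ 2) ≤ ((1 + δ) * D) ^ 2 := by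
    have e : Y * θ = 2 * Y * z := by rw [hz]; ring
    have hsq : ((1 - δ) * z) ^ 2 ≤ Real.sin z ^ 2 :=
      pow_le_pow_left₀ (mul_nonneg (by linarith) hz0) hzs 2
    have hY : Y ≤ (1 + δ) * X := by nlinarith
    have g1 : Y ^ 2 * ((1 - δ) * z) ^ 2 ≤ (1 + δ) ^ 2 * (X * Y * Real.sin z ^ 2) := by
      calc Y ^ 2 * ((1 - δ) * z) ^ 2 ≤ Y ^ 2 * Real.sin z ^ 2 := by gcongr
        _ = Y * Y * Real.sin z ^ 2 := by ring
        _ ≤ ((1 + δ) * X) * Y * Real.sin z ^ 2 := by gcongr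
        _ = (1 + δ) * (X * Y * Real.sin z ^ 2) := by ring
        _ ≤ (1 + δ) ^ 2 * (X * Y * Real.sin z ^ 2) := by
          gcongr
          nlinarith
    have g2 : (1 - δ) ^ 2 * (Y - X) ^ 2 ≤ (1 + δ) ^ 2 * (Y - X) ^ 2 := by
      gcongr <;> linarith
    rw [e, mul_pow (1 + δ) D, hlaw]
    nlinarith
  have hcs := cs_aux (A := Y - X) (T := Y * θ) (k := c / Y)
    (by
      have : c / Y ≤ 1 := (div_le_one (by linarith)).2 (hx.trans hxy)
      have : 0 ≤ c / Y := by positivity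
      nlinarith)
  have hck : c / Y * (Y * θ) = c * θ := by field_simp
  rw [hck] at hcs
  have hfin : (1 - δ) * Real.sqrt ((Y - X) ^ 2 + (Y * θ) ^ 2) ≤ (1 + δ) * D := by
    apply abs_le_of_sq_le_sq' _ (by positivity) |>.2
    rw [mul_pow, Real.sq_sqrt (by positivity)]
    exact hT
  exact (mul_le_mul_of_nonneg_left (by linarith) (by linarith)).trans hfin

lemma local_aux2 {x y : E3} {c δ : ℝ} (hc : 1 ≤ c) (hx : c ≤ ‖x‖) (hy : c ≤ ‖y‖)
    (hδ : δ < 1) (hd : ‖x - y‖ ≤ δ) :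
    (1 - δ) * (|hh c ‖x‖ - hh c ‖y‖| + c * InnerProductGeometry.angle x y)
      ≤ (1 + δ) * ‖x - y‖ := by
  have hc0 : 0 < c := by linarith
  rcases le_total ‖x‖ ‖y‖ with h | h
  · rw [abs_sub_comm, abs_of_nonneg (sub_nonneg.2 (hh_mono_right hc0 hx h))]
    exact local_aux hc hx h hδ hd
  · rw [abs_of_nonneg (sub_nonneg.2 (hh_mono_right hc0 hy h)), norm_sub_rev,
      InnerProductGeometry.angle_comm]
    exact local_aux hc hy h hδ (by rwa [norm_sub_rev])

lemma path_aux {γ : ℝ → E3} (hcont : ContinuousOn γ (Set.Icc 0 1)) {c δ : ℝ} (hc : 1 ≤ c)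
    (hγ : ∀ t ∈ Set.Icc (0:ℝ) 1, c ≤ ‖γ t‖) (hδ0 : 0 < δ) (hδ : δ < 1) (a b : ℝ)
    (ha : 0 ≤ a) (hab : a ≤ b) (hb : b ≤ 1) :
    ENNReal.ofReal ((1 - δ) *
      (|hh c ‖γ a‖ - hh c ‖γ b‖| + c * InnerProductGeometry.angle (γ a) (γ b)))
      ≤ ENNReal.ofReal (1 + δ) * eVariationOn γ (Set.Icc a b) := by
  have huc := isCompact_Icc.uniformContinuousOn_of_continuous hcont
  obtain ⟨η, hη, hu⟩ := Metric.uniformContinuousOn_iff.1 huc δ hδ0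
  have key : ∀ n : ℕ, ∀ a b : ℝ, 0 ≤ a → a ≤ b → b ≤ 1 → b - a ≤ n * (η / 2) →
      ENNReal.ofReal ((1 - δ) *
      (|hh c ‖γ a‖ - hh c ‖γ b‖| + c * InnerProductGeometry.angle (γ a) (γ b)))
      ≤ ENNReal.ofReal (1 + δ) * eVariationOn γ (Set.Icc a b) := by
    have base : ∀ a b : ℝ, 0 ≤ a → a ≤ b → b ≤ 1 → b - a ≤ η / 2 →
      ENNReal.ofReal ((1 - δ) *
      (|hh c ‖γ a‖ - hh c ‖γ b‖| + c * InnerProductGeometry.angle (γ a) (γ b)))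
      ≤ ENNReal.ofReal (1 + δ) * eVariationOn γ (Set.Icc a b) := by
      intro a b ha hab hb hd
      have ma : a ∈ Set.Icc (0:ℝ) 1 := ⟨ha, hab.trans hb⟩
      have mb : b ∈ Set.Icc (0:ℝ) 1 := ⟨ha.trans hab, hb⟩
      have h1 := hu a ma b mb (by rw [dist_comm, Real.dist_eq, abs_of_nonneg] <;> linarith)
      rw [dist_eq_norm] at h1
      refine (ENNReal.ofReal_le_ofReal (local_aux2 hc (hγ a ma) (hγ b mb) hδ h1.le)).trans ?_
      rw [ENNReal.ofReal_mul (by linarith), ← dist_eq_norm, ← edist_dist]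
      gcongr
      exact eVariationOn.edist_le γ ⟨le_rfl, hab⟩ ⟨hab, le_rfl⟩
    intro n
    induction n with
    | zero =>
      intro a b ha hab hb hd
      apply base a b ha hab hb
      simp at hd
      linarith
    | succ n ih =>
      intro a b ha hab hb hd
      rcases le_total (b - a) (η / 2) with h | h
      · exact base a b ha hab hb h
      · push_cast at hd
        have h1 := base a (a + η / 2) ha (by linarith) (by linarith) (by linarith)
        have h2 := ih (a + η / 2) b (by linarith) (by linarith) hb (by linarith)
        have hadd := eVariationOn.Icc_add_Icc γ (s := Set.univ) (a := a) (b := a + η / 2)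
          (c := b) (by linarith) (by linarith) (Set.mem_univ _)
        simp only [Set.univ_inter] at hadd
        rw [← hadd, mul_add (ENNReal.ofReal (1 + δ))]
        refine le_trans ?_ (add_le_add h1 h2)
        rw [← ENNReal.ofReal_add]
        · apply ENNReal.ofReal_le_ofReal
          rw [← mul_add]
          apply mul_le_mul_of_nonneg_left _ (by linarith)
          have t1 := abs_sub_le (hh c ‖γ a‖) (hh c ‖γ (a + η / 2)‖) (hh c ‖γ b‖)
          have t2 := mul_le_mul_of_nonneg_left
            (InnerProductGeometry.angle_le_angle_add_angle (γ a) (γ (a + η / 2)) (γ b))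
            (by linarith : 0 ≤ c)
          linarith
        all_goals
          exact mul_nonneg (by linarith) (add_nonneg (abs_nonneg _)
            (mul_nonneg (by linarith) (InnerProductGeometry.angle_nonneg _ _)))
  obtain ⟨n, hn⟩ := exists_nat_gt ((b - a) / (η / 2))
  exact key n a b ha hab hb ((div_le_iff₀ (by linarith)).1 hn.le)

/-- If `a` and `b` lie at distances `r,s ≥ 1` along opposite rays from `p`, then any
arc from `a` to `b` avoiding the open unit ball `B(p)` has length at least `f(r)+f(s)`. -/
theorem stmt2 (p a b : E3) (r s : ℝ) (hr : 1 ≤ r) (hs : 1 ≤ s)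
    (u : E3) (hu : ‖u‖ = 1) (ha : a = p + r • u) (hb : b = p - s • u)
    (γ : ℝ → E3) (hcont : ContinuousOn γ (Set.Icc 0 1))
    (hγa : γ 0 = a) (hγb : γ 1 = b)
    (hout : ∀ t ∈ Set.Icc (0:ℝ) 1, 1 ≤ dist (γ t) p) :
    ENNReal.ofReal (f r + f s) ≤ eVariationOn γ (Set.Icc 0 1) := by
  have hcont' : ContinuousOn (fun t => γ t - p) (Set.Icc 0 1) := hcont.sub continuousOn_const
  have hvar : eVariationOn γ (Set.Icc 0 1) = eVariationOn (fun t => γ t - p) (Set.Icc 0 1) := by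
    simp only [eVariationOn, edist_sub_right]
  rw [hvar]
  obtain ⟨t₀, ht₀, hmin⟩ := isCompact_Icc.exists_isMinOn (Set.nonempty_Icc.2 zero_le_one)
    hcont'.norm
  have hu0 : u ≠ 0 := by rintro rfl; simp at hu
  have hg0 : γ 0 - p = r • u := by rw [hγa, ha]; simp
  have hg1 : γ 1 - p = (-s) • u := by rw [hγb, hb]; simp
  have hn0 : ‖γ 0 - p‖ = r := by rw [hg0, norm_smul, hu, Real.norm_of_nonneg] <;> linarith
  have hn1 : ‖γ 1 - p‖ = s := by
    rw [hg1, norm_smul, hu, norm_neg, Real.norm_of_nonneg] <;> linarith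
  have hang : InnerProductGeometry.angle (γ 0 - p) (γ 1 - p) = π := by
    rw [hg0, hg1, InnerProductGeometry.angle_smul_left_of_pos _ _ (by linarith),
      InnerProductGeometry.angle_smul_right_of_neg _ _ (by linarith)]
    exact InnerProductGeometry.angle_self_neg_of_nonzero hu0
  obtain ⟨c, hcdef⟩ : ∃ c, c = ‖γ t₀ - p‖ := ⟨_, rfl⟩
  have hc : 1 ≤ c := by rw [hcdef, ← dist_eq_norm]; exact hout t₀ ht₀
  have hγ : ∀ t ∈ Set.Icc (0:ℝ) 1, c ≤ ‖γ t - p‖ := fun t ht => by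
    rw [hcdef]; exact hmin ht
  have hcr : c ≤ r := by rw [← hn0]; exact hγ 0 (by simp)
  have hcs : c ≤ s := by rw [← hn1]; exact hγ 1 (by simp)
  have hfr : f r ≤ hh c r := by
    have := hh_mono_left one_pos hc hcr
    simpa [f, hh] using this
  have hfs : f s ≤ hh c s := by
    have := hh_mono_left one_pos hc hcs
    simpa [f, hh] using this
  refine (ENNReal.ofReal_le_ofReal (add_le_add hfr hfs)).trans ?_
  set V := eVariationOn (fun t => γ t - p) (Set.Icc 0 1) with hV
  by_cases htop : V = ⊤
  · rw [htop]; exact le_top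
  have main : ∀ δ : ℝ, 0 < δ → δ < 1 → (1 - δ) * (hh c r + hh c s) ≤ (1 + δ) * V.toReal := by
    intro δ hδ0 hδ
    have h1 := path_aux hcont' hc hγ hδ0 hδ 0 t₀ le_rfl ht₀.1 ht₀.2
    have h2 := path_aux hcont' hc hγ hδ0 hδ t₀ 1 ht₀.1 ht₀.2 le_rfl
    have hadd := eVariationOn.Icc_add_Icc (fun t => γ t - p) (s := Set.univ) (a := 0) (b := t₀)
      (c := 1) ht₀.1 ht₀.2 (Set.mem_univ _)
    simp only [Set.univ_inter] at hadd
    have h3 := add_le_add h1 h2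
    rw [← mul_add, hadd, ← hV, ← ENNReal.ofReal_add] at h3
    · rw [← ENNReal.ofReal_toReal htop, ← ENNReal.ofReal_mul (by linarith),
        ENNReal.ofReal_le_ofReal_iff (by positivity), ← mul_add] at h3
      refine le_trans (mul_le_mul_of_nonneg_left ?_ (by linarith)) h3
      rw [hn0, hn1, ← hcdef, hh_self (by linarith)]
      have t1 := le_abs_self (hh c r - c * (π / 2))
      have t2 := neg_abs_le (c * (π / 2) - hh c s)
      have t3 := mul_le_mul_of_nonneg_left
        (InnerProductGeometry.angle_le_angle_add_angle (γ 0 - p) (γ t₀ - p) (γ 1 - p))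
        (by linarith : 0 ≤ c)
      rw [hang] at t3
      linarith
    all_goals
      exact mul_nonneg (by linarith) (add_nonneg (abs_nonneg _)
        (mul_nonneg (by linarith) (InnerProductGeometry.angle_nonneg _ _)))
  apply ENNReal.ofReal_le_of_le_toReal
  by_contra hcon
  push Not at hcon
  have hV0 : 0 ≤ V.toReal := ENNReal.toReal_nonneg
  obtain ⟨H, hH⟩ : ∃ H, H = hh c r + hh c s := ⟨_, rfl⟩
  rw [← hH] at hcon main
  have hH0 : 0 < H := by linarith
  have h5 := main ((H - V.toReal) / (4 * H)) (div_pos (by linarith) (by linarith))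
    ((div_lt_one (by linarith)).2 (by linarith))
  have h6 : (H - V.toReal) / (4 * H) * H = (H - V.toReal) / 4 := by field_simp
  have h7 : (H - V.toReal) / (4 * H) * V.toReal ≤ (H - V.toReal) / (4 * H) * H :=
    mul_le_mul_of_nonneg_left hcon.le (div_nonneg (by linarith) (by linarith))
  nlinarith
end

section
/- Let K be a closed curve of unit thickness and let a, b ∈ K with 0 < |a-b| < 1. Then the closed ball with diameter segment ab intersects K in a single subarc (one of the two subarcs from a to b), and that subarc has length at most arcsin|a-b|. -/
open Real Set

open scoped RealInnerProductSpace

/-- the sphere lemma in squared form -/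
lemma thick_sq {K : Set E3} (hK : ThickOne K) {x y z : E3} (hx : x ∈ K) (hy : y ∈ K) (hz : z ∈ K)
    (hxy : x ≠ y) (hyz : y ≠ z) (hxz : x ≠ z) (c : E3)
    (h1 : ‖x - c‖ ^ 2 = ‖y - c‖ ^ 2) (h2 : ‖z - c‖ ^ 2 = ‖y - c‖ ^ 2) :
    1 / 4 ≤ ‖y - c‖ ^ 2 := by
  have e1 : ‖x - c‖ = ‖y - c‖ := (sq_eq_sq₀ (norm_nonneg _) (norm_nonneg _)).1 h1
  have e2 : ‖z - c‖ = ‖y - c‖ := (sq_eq_sq₀ (norm_nonneg _) (norm_nonneg _)).1 h2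
  have := hK x hx y hy z hz hxy hyz hxz c (‖y - c‖) (by rw [dist_eq_norm, e1])
    (by rw [dist_eq_norm]) (by rw [dist_eq_norm, e2])
  nlinarith

/-- P function; negative iff inside open ball with diameter a b -/
noncomputable def PP (a b c : E3) : ℝ := ⟪c - a, c - b⟫

lemma PP_eq (a b c : E3) : PP a b c = ‖c - b‖ ^ 2 + ⟪c - b, b - a⟫ := by
  unfold PP
  have : c - a = (c - b) + (b - a) := by abel
  rw [this, inner_add_left, real_inner_self_eq_norm_sq, real_inner_comm]

lemma PP_comm (a b c : E3) : PP a b c = PP b a c := by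
  unfold PP; rw [real_inner_comm]

lemma norm_mid (a b c : E3) :
    ‖c - midpoint ℝ a b‖ ^ 2 = PP a b c + (‖b - a‖ / 2) ^ 2 := by
  have h : c - midpoint ℝ a b = (c - b) + (1/2 : ℝ) • (b - a) := by
    rw [midpoint_eq_smul_add, invOf_eq_inv]; module
  rw [h, norm_add_sq_real, PP_eq, norm_smul, inner_smul_right]
  norm_num
  ring

lemma PP_ne {K : Set E3} (hK : ThickOne K) {a b c : E3} (ha : a ∈ K) (hb : b ∈ K) (hc : c ∈ K)
    (hab : a ≠ b) (hca : c ≠ a) (hcb : c ≠ b) (hd : ‖b - a‖ < 1) : PP a b c ≠ 0 := by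
  intro h0
  have e1 := norm_mid a b a
  have e2 := norm_mid a b b
  have e3 := norm_mid a b c
  have z1 : PP a b a = 0 := by simp [PP]
  have z2 : PP a b b = 0 := by simp [PP]
  have := thick_sq hK ha hb hc hab hcb.symm hca.symm (midpoint ℝ a b)
    (by rw [e1, e2, z1, z2]) (by rw [e3, e2, h0, z2])
  rw [e2, z2] at this
  nlinarith [norm_nonneg (b - a)]

/-- key inequality -/
lemma key {K : Set E3} (hK : ThickOne K) {a b c : E3} (ha : a ∈ K) (hb : b ∈ K) (hc : c ∈ K)
    (hab : a ≠ b) (hca : c ≠ a) (hcb : c ≠ b) :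
    (1 - ‖b - a‖ ^ 2) * (‖c - b‖ ^ 2 * ‖b - a‖ ^ 2 - ⟪c - b, b - a⟫ ^ 2)
      ≤ PP a b c ^ 2 * ‖b - a‖ ^ 2 := by
  by_contra! hlt
  rw [PP_eq] at hlt
  have hdpos : 0 < ‖b - a‖ := norm_pos_iff.2 (sub_ne_zero.2 hab.symm)
  set v := c - b with hv
  set w := b - a with hw
  set d := ‖w‖ with hd
  set y := ‖v‖ with hy
  set A := ⟪v, w⟫ with hA
  have hCS : A ^ 2 ≤ y ^ 2 * d ^ 2 := by
    have := abs_real_inner_le_norm v w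
    have h2 := sq_le_sq' (by linarith [neg_abs_le A, (abs_le.1 this).1]) (abs_le.1 this).2
    nlinarith
  have hB : 0 < y ^ 2 * d ^ 2 - A ^ 2 := by
    rcases (sub_nonneg.2 hCS).lt_or_eq with h | h
    · exact h
    · rw [← h] at hlt; nlinarith [sq_nonneg ((y ^ 2 + A) * d)]
  set B := y ^ 2 * d ^ 2 - A ^ 2 with hBdef
  set P := y ^ 2 + A with hP
  -- perpendicular vector n := d^2 v - A w ; ‖n‖^2 = d^2 B ; <v,n> = B ; <w,n> = 0
  set n : E3 := (d ^ 2) • v - A • w with hn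
  have hww : ⟪w, w⟫ = d ^ 2 := real_inner_self_eq_norm_sq w
  have hvv : ⟪v, v⟫ = y ^ 2 := real_inner_self_eq_norm_sq v
  have hwv : ⟪w, v⟫ = A := real_inner_comm _ _
  have hvn : ⟪v, n⟫ = B := by
    rw [hn, inner_sub_right, inner_smul_right, inner_smul_right, hvv, ← hA]; ring
  have hwn : ⟪w, n⟫ = 0 := by
    rw [hn, inner_sub_right, inner_smul_right, inner_smul_right, hww, hwv]; ring
  have hnn : ‖n‖ ^ 2 = d ^ 2 * B := by
    rw [← real_inner_self_eq_norm_sq]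
    conv_lhs => rw [hn]
    rw [inner_sub_left, inner_smul_left, inner_smul_left, hvn, hwn]; simp
  set s : ℝ := P / (2 * B) with hs
  have hsB : 2 * s * B = P := by rw [hs]; field_simp
  -- center
  set p : E3 := b - (1/2 : ℝ) • w + s • n with hp
  have hbp : b - p = (1/2 : ℝ) • w - s • n := by rw [hp]; module
  have hap : a - p = -((1/2 : ℝ) • w) - s • n := by rw [hp, hw]; module
  have hcp : c - p = v + ((1/2 : ℝ) • w - s • n) := by rw [hp, hv]; module
  have nb : ‖b - p‖ ^ 2 = d ^ 2 / 4 + s ^ 2 * (d ^ 2 * B) := by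
    rw [hbp, norm_sub_sq_real, inner_smul_left, inner_smul_right, hwn, norm_smul, norm_smul,
      mul_pow, mul_pow, hnn, ← hd]
    simp; ring
  have na : ‖a - p‖ ^ 2 = d ^ 2 / 4 + s ^ 2 * (d ^ 2 * B) := by
    rw [hap, norm_sub_sq_real, inner_neg_left, inner_smul_left, inner_smul_right, hwn, norm_neg,
      norm_smul, norm_smul, mul_pow, mul_pow, hnn, ← hd]
    simp; ring
  have nc : ‖c - p‖ ^ 2 = d ^ 2 / 4 + s ^ 2 * (d ^ 2 * B) := by
    rw [hcp, norm_add_sq_real, ← hbp, nb, hbp, inner_sub_right, inner_smul_right,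
      inner_smul_right, hvn, ← hA, ← hy]
    linear_combination -hsB
  have := thick_sq hK ha hb hc hab hcb.symm hca.symm p (by rw [na, nb]) (by rw [nc, nb])
  rw [nb] at this
  -- s^2 d^2 B = P^2 d^2/(4B) < (1-d^2)/4
  have h3 : s ^ 2 * (d ^ 2 * B) * (4 * B) = P ^ 2 * d ^ 2 := by rw [← hsB]; ring
  have h4 : (1 - d ^ 2) / 4 ≤ s ^ 2 * (d ^ 2 * B) := by linarith
  have h5 := mul_le_mul_of_nonneg_right h4 (by positivity : 0 ≤ 4 * B)
  rw [h3] at h5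
  linarith

lemma near {K : Set E3} (hK : ThickOne K) {a b c : E3} (ha : a ∈ K) (hb : b ∈ K) (hc : c ∈ K)
    (hab : a ≠ b) (hca : c ≠ a) (hcb : c ≠ b) (hd : ‖b - a‖ < 1) {k : ℝ} (hk : 0 < k)
    (hk2 : 4 * k ^ 2 = ‖b - a‖ ^ 2 * (1 - ‖b - a‖ ^ 2)) (he : ‖c - b‖ < k) :
    (0 < PP a b c → k * ‖c - b‖ ≤ ⟪c - b, b - a⟫) ∧
    (PP a b c < 0 → ⟪c - b, b - a⟫ ≤ - (k * ‖c - b‖)) := by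
  have hkey := key hK ha hb hc hab hca hcb
  have hdpos : 0 < ‖b - a‖ := norm_pos_iff.2 (sub_ne_zero.2 hab.symm)
  have hepos : 0 < ‖c - b‖ := norm_pos_iff.2 (sub_ne_zero.2 hcb)
  rw [PP_eq] at *
  set d := ‖b - a‖
  set e := ‖c - b‖
  set A := ⟪c - b, b - a⟫
  have hd2 : 0 < 1 - d ^ 2 := by nlinarith
  have hee : e ^ 2 < k * e := by nlinarith
  have main : -(k * e) < A → A < k * e → (e ^ 2 + A) ^ 2 ≤ 4 * (k * e) ^ 2 → False := by
    intro h1 h2 h3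
    have hA2 : A ^ 2 < (k * e) ^ 2 := sq_lt_sq' h1 h2
    have h4 : (e ^ 2 + A) ^ 2 * d ^ 2 ≤ 4 * (k * e) ^ 2 * d ^ 2 :=
      mul_le_mul_of_nonneg_right h3 (by positivity)
    have h5 : (1 - d ^ 2) * (e ^ 2 * d ^ 2 - (k * e) ^ 2) < (1 - d ^ 2) * (e ^ 2 * d ^ 2 - A ^ 2) :=
      mul_lt_mul_of_pos_left (by linarith) hd2
    have h6 : (1 - d ^ 2) * (e ^ 2 * d ^ 2 - (k * e) ^ 2) < 4 * (k * e) ^ 2 * d ^ 2 := by linarith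
    have h7 : (k * e) ^ 2 = d ^ 2 * (1 - d ^ 2) / 4 * e ^ 2 := by
      rw [mul_pow, ← hk2]; ring
    rw [h7] at h6
    have h8 : 0 < (1 - d ^ 2) * d ^ 2 * e ^ 2 := by positivity
    have h9 : (1 - d ^ 2) * d ^ 2 * e ^ 2 * (1 - (1 - d ^ 2) / 4 - d ^ 2) < 0 := by
      nlinarith
    have h10 : 0 < 1 - (1 - d ^ 2) / 4 - d ^ 2 := by linarith
    nlinarith [mul_pos h8 h10]
  constructor
  · intro hP
    by_contra! h
    refine main (by linarith) h ?_
    have : (e ^ 2 + A) ^ 2 ≤ (2 * (k * e)) ^ 2 := pow_le_pow_left₀ hP.le (by linarith) 2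
    linarith
  · intro hP
    by_contra! h
    refine main h (by nlinarith) ?_
    have : (e ^ 2 + A) ^ 2 ≤ (2 * (k * e)) ^ 2 := by
      apply sq_le_sq' <;> nlinarith
    linarith

lemma local_contra {K : Set E3} (hK : ThickOne K) {a b c₁ c₂ : E3} (ha : a ∈ K) (hb : b ∈ K)
    (hc₁ : c₁ ∈ K) (hc₂ : c₂ ∈ K)
    (hab : a ≠ b) (hca₁ : c₁ ≠ a) (hcb₁ : c₁ ≠ b) (hca₂ : c₂ ≠ a) (hcb₂ : c₂ ≠ b)
    (hcc : c₁ ≠ c₂) (hd : ‖b - a‖ < 1) {k : ℝ} (hk : 0 < k)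
    (hk2 : 4 * k ^ 2 = ‖b - a‖ ^ 2 * (1 - ‖b - a‖ ^ 2)) (he : ‖c₁ - b‖ < k)
    (hee : ‖c₂ - b‖ = ‖c₁ - b‖)
    (hs : (0 < PP a b c₁ ∧ 0 < PP a b c₂) ∨ (PP a b c₁ < 0 ∧ PP a b c₂ < 0)) : False := by
  have n1 := near hK ha hb hc₁ hab hca₁ hcb₁ hd hk hk2 he
  have n2 := near hK ha hb hc₂ hab hca₂ hcb₂ hd hk hk2 (hee ▸ he)
  have hepos : 0 < ‖c₁ - b‖ := norm_pos_iff.2 (sub_ne_zero.2 hcb₁)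
  have hdpos : 0 < ‖b - a‖ := norm_pos_iff.2 (sub_ne_zero.2 hab.symm)
  rw [hee] at n2
  set e := ‖c₁ - b‖ with hedef
  set w : E3 := (c₁ - b) + (c₂ - b) with hw
  have hbig : 2 * (k * e) ≤ ‖w‖ * ‖b - a‖ := by
    have h1 := abs_real_inner_le_norm w (b - a)
    have h2 : ⟪w, b - a⟫ = ⟪c₁ - b, b - a⟫ + ⟪c₂ - b, b - a⟫ := by rw [hw, inner_add_left]
    rw [h2] at h1
    rcases hs with ⟨p, q⟩ | ⟨p, q⟩
    · have := n1.1 p; have := n2.1 q; have := (abs_le.1 h1).2; linarith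
    · have := n1.2 p; have := n2.2 q; have := (abs_le.1 h1).1; linarith
  have hw2 : 2 * e ^ 2 < ‖w‖ := by
    have h1 : 2 * (k * e) ≤ ‖w‖ := by nlinarith [norm_nonneg w]
    nlinarith
  have hwpos : 0 < ‖w‖ := by nlinarith
  -- sphere: center b + t w, t = e^2/‖w‖^2
  set t : ℝ := e ^ 2 / ‖w‖ ^ 2 with ht
  have htw : t * ‖w‖ ^ 2 = e ^ 2 := by rw [ht]; field_simp
  have hwsq : ‖w‖ ^ 2 = 2 * e ^ 2 + 2 * ⟪c₁ - b, c₂ - b⟫ := by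
    rw [hw, norm_add_sq_real, hee, ← hedef]; ring
  have i1 : ⟪c₁ - b, w⟫ = ‖w‖ ^ 2 / 2 := by
    rw [hwsq, hw, inner_add_right, real_inner_self_eq_norm_sq, ← hedef]; ring
  have i2 : ⟪c₂ - b, w⟫ = ‖w‖ ^ 2 / 2 := by
    rw [hwsq, hw, inner_add_right, real_inner_self_eq_norm_sq, hee, real_inner_comm]; ring
  have q0 : ‖b - (b + t • w)‖ ^ 2 = t ^ 2 * ‖w‖ ^ 2 := by
    rw [sub_add_cancel_left, norm_neg, norm_smul, mul_pow]; simp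
  have q1 : ‖c₁ - (b + t • w)‖ ^ 2 = t ^ 2 * ‖w‖ ^ 2 := by
    rw [← sub_sub, norm_sub_sq_real, inner_smul_right, i1, norm_smul, mul_pow, ← hedef]
    simp; linear_combination -htw
  have q2 : ‖c₂ - (b + t • w)‖ ^ 2 = t ^ 2 * ‖w‖ ^ 2 := by
    rw [← sub_sub, norm_sub_sq_real, inner_smul_right, i2, norm_smul, mul_pow, hee]
    simp; linear_combination -htw
  have := thick_sq hK hc₁ hb hc₂ hcb₁ hcb₂.symm hcc (b + t • w) (by rw [q0, q1]) (by rw [q0, q2])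
  rw [q0] at this
  have h3 : t ^ 2 * ‖w‖ ^ 2 * ‖w‖ ^ 2 = e ^ 4 := by
    calc _ = (t * ‖w‖ ^ 2) ^ 2 := by ring
      _ = _ := by rw [htw]; ring
  have h4 := mul_le_mul_of_nonneg_right this (sq_nonneg ‖w‖)
  rw [h3] at h4
  have h5 : (2 * e ^ 2) ^ 2 < ‖w‖ ^ 2 := pow_lt_pow_left₀ hw2 (by positivity) (by norm_num)
  nlinarith

lemma arcsin_super {x y d P : ℝ} (hx : 0 < x) (hy : 0 < y) (hd0 : 0 < d) (hd : d < 1)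
    (hP : x ^ 2 + y ^ 2 - d ^ 2 = 2 * P) (hPneg : P < 0)
    (hkey : (1 - d ^ 2) * (x ^ 2 * y ^ 2 - P ^ 2) ≤ P ^ 2 * d ^ 2) :
    arcsin x + arcsin y ≤ arcsin d := by
  have hx1 : x < 1 := by nlinarith
  have hy1 : y < 1 := by nlinarith
  have hsum : arcsin x + arcsin y ≤ π / 2 := by
    have : arcsin y ≤ arcsin (√(1 - x ^ 2)) := by
      apply Real.arcsin_le_arcsin
      apply Real.le_sqrt_of_sq_le
      nlinarith
    have h2 : arcsin (√(1 - x ^ 2)) = arccos x := (Real.arccos_eq_arcsin hx.le).symm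
    rw [h2, Real.arccos] at this
    linarith
  have hnn : 0 ≤ arcsin x + arcsin y :=
    add_nonneg (Real.arcsin_nonneg.2 hx.le) (Real.arcsin_nonneg.2 hy.le)
  rw [Real.le_arcsin_iff_sin_le' ⟨by linarith [Real.pi_pos], hsum⟩, Real.sin_add,
    Real.sin_arcsin (by linarith) hx1.le, Real.sin_arcsin (by linarith) hy1.le,
    Real.cos_arcsin, Real.cos_arcsin]
  set p := √(1 - x ^ 2) with hp
  set q := √(1 - y ^ 2) with hq
  have hp2 : p ^ 2 = 1 - x ^ 2 := Real.sq_sqrt (by nlinarith)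
  have hq2 : q ^ 2 = 1 - y ^ 2 := Real.sq_sqrt (by nlinarith)
  have hp0 : 0 ≤ p := Real.sqrt_nonneg _
  have hq0 : 0 ≤ q := Real.sqrt_nonneg _
  apply abs_le_of_sq_le_sq' _ hd0.le |>.2
  -- P^2 ≥ (1-d^2) x^2 y^2 ; -P ≥ xy(pq - xy)
  have hk1 : (1 - d ^ 2) * (x * y) ^ 2 ≤ P ^ 2 := by nlinarith
  have hk2 : (x * y * (p * q)) ^ 2 ≤ (-P + (x * y) ^ 2) ^ 2 := by
    have : (x * y * (p * q)) ^ 2 = (x * y) ^ 2 * ((1 - x ^ 2) * (1 - y ^ 2)) := by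
      rw [← hp2, ← hq2]; ring
    rw [this]
    have hd2 : d ^ 2 = x ^ 2 + y ^ 2 - 2 * P := by linarith
    rw [hd2] at hk1
    nlinarith
  have hk3 : x * y * (p * q) ≤ -P + (x * y) ^ 2 :=
    (abs_le_of_sq_le_sq' hk2 (by nlinarith [sq_nonneg (x * y)])).2
  have : (x * q + p * y) ^ 2 = x ^ 2 * (1 - y ^ 2) + (1 - x ^ 2) * y ^ 2 + 2 * (x * y * (p * q)) := by
    rw [← hp2, ← hq2]; ring
  rw [this]
  nlinarith

lemma super_pt {K : Set E3} (hK : ThickOne K) {a b c : E3} (ha : a ∈ K) (hb : b ∈ K) (hc : c ∈ K)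
    (hab : a ≠ b) (hca : c ≠ a) (hcb : c ≠ b) (hd : dist a b < 1) (hP : PP a b c < 0) :
    arcsin (dist a c) + arcsin (dist c b) ≤ arcsin (dist a b) := by
  have hkey := key hK ha hb hc hab hca hcb
  have e : ‖c - a‖ ^ 2 = ‖c - b‖ ^ 2 + 2 * ⟪c - b, b - a⟫ + ‖b - a‖ ^ 2 := by
    rw [← norm_add_sq_real]; congr 2; abel
  have hPe := PP_eq a b c
  rw [dist_comm a c, dist_comm a b] at *
  rw [dist_eq_norm] at *
  rw [dist_eq_norm] at *
  rw [dist_eq_norm]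
  refine arcsin_super (P := PP a b c) (norm_pos_iff.2 (sub_ne_zero.2 hca))
    (norm_pos_iff.2 (sub_ne_zero.2 hcb)) (norm_pos_iff.2 (sub_ne_zero.2 hab.symm)) hd ?_ hP ?_
  · linarith
  · convert hkey using 2
    have : ⟪c - b, b - a⟫ = PP a b c - ‖c - b‖ ^ 2 := by linarith
    rw [e, this]; ring

lemma per_inj {γ : ℝ → E3} {L : ℝ} (hL : 0 < L)
    (hper : Function.Periodic γ L) (hinj : Set.InjOn γ (Set.Ico 0 L)) {x y : ℝ}
    (hxy : x < y) (hyL : y < x + L) : γ x ≠ γ y := by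
  intro h
  have h1 : ∀ z, γ (toIcoMod hL 0 z) = γ z := by
    intro z
    rw [← self_sub_toIcoDiv_zsmul]
    exact hper.sub_zsmul_eq _
  have h2 : toIcoMod hL 0 x = toIcoMod hL 0 y := by
    apply hinj (toIcoMod_mem_Ico' hL x) (toIcoMod_mem_Ico' hL y)
    rw [h1, h1, h]
  rw [← self_sub_toIcoDiv_zsmul, ← self_sub_toIcoDiv_zsmul] at h2
  set i := toIcoDiv hL 0 x
  set j := toIcoDiv hL 0 y
  simp only [zsmul_eq_mul] at h2
  have h3 : y - x = ((j - i : ℤ) : ℝ) * L := by push_cast; linarith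
  have h4 : (0 : ℝ) < ((j - i : ℤ) : ℝ) := by
    by_contra! hh
    nlinarith
  have h5 : ((j - i : ℤ) : ℝ) < 1 := by
    by_contra! hh
    nlinarith
  have h6 : 0 < j - i := by exact_mod_cast h4
  have h7 : j - i < 1 := by exact_mod_cast h5
  omega

lemma sign_const {h : ℝ → ℝ} (hc : Continuous h) {u v : ℝ} (hne : ∀ x ∈ Ioo u v, h x ≠ 0) :
    (∀ x ∈ Ioo u v, h x < 0) ∨ (∀ x ∈ Ioo u v, 0 < h x) := by
  by_contra! hh
  obtain ⟨⟨x, hx, hx0⟩, ⟨y, hy, hy0⟩⟩ := hh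
  obtain ⟨z, hz, hz0⟩ := isPreconnected_Ioo.intermediate_value hy hx hc.continuousOn ⟨hy0, hx0⟩
  exact hne z hz hz0

lemma dich {γ : ℝ → E3} {L : ℝ} (hL : 0 < L) (hcont : Continuous γ)
    (hper : Function.Periodic γ L) (hinj : Set.InjOn γ (Set.Ico 0 L))
    (hthick : ThickOne (Set.range γ)) {s t : ℝ} (hst : s < t) (htL : t < s + L)
    (hd : dist (γ s) (γ t) < 1) :
    ((∀ x ∈ Ioo s t, PP (γ s) (γ t) (γ x) < 0) ∧
      (∀ x ∈ Ioo t (s + L), 0 < PP (γ s) (γ t) (γ x))) ∨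
    ((∀ x ∈ Ioo s t, 0 < PP (γ s) (γ t) (γ x)) ∧
      (∀ x ∈ Ioo t (s + L), PP (γ s) (γ t) (γ x) < 0)) := by
  have hinj' : ∀ {x y : ℝ}, x < y → y < x + L → γ x ≠ γ y := per_inj hL hper hinj
  have hab := hinj' hst htL
  have hd' : ‖γ t - γ s‖ < 1 := by rwa [← dist_eq_norm, dist_comm]
  have hPc : Continuous (fun x => PP (γ s) (γ t) (γ x)) := by
    unfold PP; fun_prop
  have hsL : γ (s + L) = γ s := hper s
  have ne1 : ∀ x ∈ Ioo s t, γ x ≠ γ s ∧ γ x ≠ γ t := fun x hx =>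
    ⟨(hinj' hx.1 (by linarith [hx.2])).symm, hinj' hx.2 (by linarith [hx.1])⟩
  have ne2 : ∀ x ∈ Ioo t (s + L), γ x ≠ γ s ∧ γ x ≠ γ t := fun x hx =>
    ⟨hsL ▸ hinj' hx.2 (by linarith [hx.1]), (hinj' hx.1 (by linarith [hx.2])).symm⟩
  have c1 := sign_const hPc (u := s) (v := t) (fun x hx =>
    PP_ne hthick ⟨s, rfl⟩ ⟨t, rfl⟩ ⟨x, rfl⟩ hab (ne1 x hx).1 (ne1 x hx).2 hd')
  have c2 := sign_const hPc (u := t) (v := s + L) (fun x hx =>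
    PP_ne hthick ⟨s, rfl⟩ ⟨t, rfl⟩ ⟨x, rfl⟩ hab (ne2 x hx).1 (ne2 x hx).2 hd')
  have hdpos : 0 < ‖γ t - γ s‖ := norm_pos_iff.2 (sub_ne_zero.2 hab.symm)
  -- the local contradiction at `γ t`
  have contra : ∀ hs : ((∀ x ∈ Ioo s t, 0 < PP (γ s) (γ t) (γ x)) ∧
      (∀ x ∈ Ioo t (s + L), 0 < PP (γ s) (γ t) (γ x))) ∨
      ((∀ x ∈ Ioo s t, PP (γ s) (γ t) (γ x) < 0) ∧
      (∀ x ∈ Ioo t (s + L), PP (γ s) (γ t) (γ x) < 0)), False := by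
    intro hs
    set d := ‖γ t - γ s‖ with hddef
    have hd2 : 0 < 1 - d ^ 2 := by nlinarith
    set k : ℝ := d * √(1 - d ^ 2) / 2 with hkdef
    have hsq : √(1 - d ^ 2) ^ 2 = 1 - d ^ 2 := Real.sq_sqrt hd2.le
    have hk : 0 < k := by have := Real.sqrt_pos.2 hd2; positivity
    have hk2 : 4 * k ^ 2 = d ^ 2 * (1 - d ^ 2) := by
      rw [hkdef, ← hsq]
      simp only [hsq]
      rw [div_pow, mul_pow, hsq]; ring
    have hkd : k < d := by
      by_contra! hh
      have : d ^ 2 ≤ k ^ 2 := pow_le_pow_left₀ hdpos.le hh 2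
      nlinarith [mul_pos (pow_pos hdpos 2) hd2]
    have hfc : Continuous (fun x => ‖γ x - γ t‖) := by fun_prop
    obtain ⟨x, hx, hxe⟩ := intermediate_value_Ioo' hst.le hfc.continuousOn
      (show k / 2 ∈ Ioo ‖γ t - γ t‖ ‖γ s - γ t‖ by
        rw [norm_sub_rev (γ s), ← hddef, sub_self, norm_zero]; constructor <;> linarith)
    obtain ⟨y, hy, hye⟩ := intermediate_value_Ioo htL.le hfc.continuousOn
      (show k / 2 ∈ Ioo ‖γ t - γ t‖ ‖γ (s + L) - γ t‖ by
        rw [hsL, norm_sub_rev (γ s), ← hddef, sub_self, norm_zero]; constructor <;> linarith)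
    simp only at hxe hye
    refine local_contra hthick ⟨s, rfl⟩ ⟨t, rfl⟩ ⟨x, rfl⟩ ⟨y, rfl⟩ hab (ne1 x hx).1 (ne1 x hx).2
      (ne2 y hy).1 (ne2 y hy).2 (hinj' (hx.2.trans hy.1) (by linarith [hx.1, hy.2])) hd' hk hk2
      (by rw [hxe]; linarith) (by rw [hxe, hye]) ?_
    rcases hs with h | h
    · exact Or.inl ⟨h.1 x hx, h.2 y hy⟩
    · exact Or.inr ⟨h.1 x hx, h.2 y hy⟩
  rcases c1 with c1 | c1 <;> rcases c2 with c2 | c2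
  · exact (contra (Or.inr ⟨c1, c2⟩)).elim
  · exact Or.inl ⟨c1, c2⟩
  · exact Or.inr ⟨c1, c2⟩
  · exact (contra (Or.inl ⟨c1, c2⟩)).elim

/-- good arcs -/
def GoodArc (γ : ℝ → E3) (L s t : ℝ) : Prop :=
  s < t ∧ t < s + L ∧ dist (γ s) (γ t) < 1 ∧ ∀ x ∈ Ioo s t, PP (γ s) (γ t) (γ x) < 0

lemma good_sub {γ : ℝ → E3} {L : ℝ} (hL : 0 < L) (hcont : Continuous γ)
    (hper : Function.Periodic γ L) (hinj : Set.InjOn γ (Set.Ico 0 L))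
    (hthick : ThickOne (Set.range γ)) {s c t : ℝ} (hG : GoodArc γ L s t) (hsc : s < c)
    (hct : c < t) : GoodArc γ L s c ∧ GoodArc γ L c t := by
  obtain ⟨hst, htL, hd, hP⟩ := hG
  have hc := hP c ⟨hsc, hct⟩
  -- X = γ c - γ s, Y = γ t - γ c
  set X := γ c - γ s with hX
  set Y := γ t - γ c with hY
  have hXY : 0 < ⟪X, Y⟫ := by
    have : PP (γ s) (γ t) (γ c) = - ⟪X, Y⟫ := by
      unfold PP
      rw [← inner_neg_right, hX, hY, neg_sub]
    linarith
  have hsum : γ t - γ s = X + Y := by rw [hX, hY]; abel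
  have hnorm : ‖γ t - γ s‖ ^ 2 = ‖X‖ ^ 2 + 2 * ⟪X, Y⟫ + ‖Y‖ ^ 2 := by
    rw [hsum, norm_add_sq_real]
  rw [dist_comm, dist_eq_norm] at hd
  have hd1 : dist (γ s) (γ c) < 1 := by
    rw [dist_comm, dist_eq_norm, ← hX]
    nlinarith [norm_nonneg X, norm_nonneg Y, norm_nonneg (γ t - γ s)]
  have hd2 : dist (γ c) (γ t) < 1 := by
    rw [dist_comm, dist_eq_norm, ← hY]
    nlinarith [norm_nonneg X, norm_nonneg Y, norm_nonneg (γ t - γ s)]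
  refine ⟨⟨hsc, by linarith, hd1, ?_⟩, ⟨hct, by linarith, hd2, ?_⟩⟩
  · rcases dich hL hcont hper hinj hthick hsc (by linarith) hd1 with h | h
    · exact h.1
    · exfalso
      have := h.2 t ⟨hct, htL⟩
      unfold PP at this
      rw [hsum, ← hY, inner_add_left, real_inner_self_eq_norm_sq] at this
      nlinarith [sq_nonneg ‖Y‖]
  · rcases dich hL hcont hper hinj hthick hct (by linarith) hd2 with h | h
    · exact h.1
    · exfalso
      have := h.2 (s + L) ⟨htL, by linarith⟩
      rw [hper s] at this
      unfold PP at this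
      rw [← neg_sub (γ c), ← neg_sub (γ t), hsum, ← hX, inner_neg_neg, inner_add_right,
        real_inner_self_eq_norm_sq] at this
      nlinarith [sq_nonneg ‖X‖]

lemma good_super {γ : ℝ → E3} {L : ℝ} (hL : 0 < L) (hcont : Continuous γ)
    (hper : Function.Periodic γ L) (hinj : Set.InjOn γ (Set.Ico 0 L))
    (hthick : ThickOne (Set.range γ)) {s t : ℝ} (hG : GoodArc γ L s t) {x y z : ℝ}
    (hsx : s ≤ x) (hxy : x ≤ y) (hyz : y ≤ z) (hzt : z ≤ t) :
    arcsin (dist (γ x) (γ y)) + arcsin (dist (γ y) (γ z)) ≤ arcsin (dist (γ x) (γ z)) := by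
  rcases hxy.eq_or_lt with rfl | hxy
  · simp
  rcases hyz.eq_or_lt with rfl | hyz
  · simp
  have hG1 : GoodArc γ L s z := by
    rcases hzt.eq_or_lt with rfl | hzt
    · exact hG
    · exact (good_sub hL hcont hper hinj hthick hG (by linarith) hzt).1
  have hG2 : GoodArc γ L x z := by
    rcases hsx.eq_or_lt with rfl | hsx
    · exact hG1
    · exact (good_sub hL hcont hper hinj hthick hG1 hsx (by linarith)).2
  obtain ⟨h1, h2, h3, h4⟩ := hG2
  have hinj' : ∀ {x y : ℝ}, x < y → y < x + L → γ x ≠ γ y := per_inj hL hper hinj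
  exact super_pt hthick ⟨x, rfl⟩ ⟨z, rfl⟩ ⟨y, rfl⟩ (hinj' h1 h2)
    (hinj' hxy (by linarith)).symm (hinj' hyz (by linarith)) h3 (h4 y ⟨hxy, hyz⟩)

lemma le_arcsin_self {x : ℝ} (h0 : 0 ≤ x) (h1 : x ≤ 1) : x ≤ arcsin x := by
  have := Real.sin_le (Real.arcsin_nonneg.2 h0)
  rwa [Real.sin_arcsin (by linarith) h1] at this

lemma good_var {γ : ℝ → E3} {L : ℝ} (hL : 0 < L) (hcont : Continuous γ)
    (hper : Function.Periodic γ L) (hinj : Set.InjOn γ (Set.Ico 0 L))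
    (hthick : ThickOne (Set.range γ)) {s t : ℝ} (hG : GoodArc γ L s t) :
    eVariationOn γ (Icc s t) ≤ ENNReal.ofReal (arcsin (dist (γ s) (γ t))) := by
  have hsup : ∀ {x y z : ℝ}, s ≤ x → x ≤ y → y ≤ z → z ≤ t →
    arcsin (dist (γ x) (γ y)) + arcsin (dist (γ y) (γ z)) ≤ arcsin (dist (γ x) (γ z)) :=
    good_super hL hcont hper hinj hthick hG
  have hnn : ∀ x y : ℝ, 0 ≤ arcsin (dist (γ x) (γ y)) := fun x y =>
    Real.arcsin_nonneg.2 dist_nonneg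
  have hmono : ∀ {x y : ℝ}, s ≤ x → x ≤ y → y ≤ t →
      arcsin (dist (γ x) (γ y)) ≤ arcsin (dist (γ s) (γ t)) := by
    intro x y h1 h2 h3
    have e1 := hsup h1 h2 h3 le_rfl
    have e2 := hsup le_rfl h1 (h2.trans h3) le_rfl
    linarith [hnn y t, hnn s x]
  have hdle : ∀ {x y : ℝ}, s ≤ x → x ≤ y → y ≤ t →
      dist (γ x) (γ y) ≤ arcsin (dist (γ x) (γ y)) := by
    intro x y h1 h2 h3
    apply le_arcsin_self dist_nonneg
    by_contra! hh
    have e := hmono h1 h2 h3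
    rw [Real.arcsin_of_one_le hh.le] at e
    have := Real.arcsin_lt_pi_div_two.2 hG.2.2.1
    linarith
  apply iSup_le
  rintro ⟨n, u, hu, hmem⟩
  simp only
  have hsum : ∀ n : ℕ, ∑ i ∈ Finset.range n, arcsin (dist (γ (u i)) (γ (u (i + 1))))
      ≤ arcsin (dist (γ (u 0)) (γ (u n))) := by
    intro n
    induction n with
    | zero => simp
    | succ n ih =>
      rw [Finset.sum_range_succ]
      have := hsup (hmem 0).1 (hu (Nat.zero_le n)) (hu (Nat.le_succ n)) (hmem (n + 1)).2
      linarith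
  calc ∑ i ∈ Finset.range n, edist (γ (u (i + 1))) (γ (u i))
      ≤ ∑ i ∈ Finset.range n, ENNReal.ofReal (arcsin (dist (γ (u i)) (γ (u (i + 1))))) := by
        apply Finset.sum_le_sum
        intro i _
        rw [edist_comm, edist_dist]
        exact ENNReal.ofReal_le_ofReal (hdle (hmem i).1 (hu (Nat.le_succ i)) (hmem (i + 1)).2)
    _ = ENNReal.ofReal (∑ i ∈ Finset.range n, arcsin (dist (γ (u i)) (γ (u (i + 1))))) :=
        (ENNReal.ofReal_sum_of_nonneg (fun i _ => hnn _ _)).symm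
    _ ≤ _ := ENNReal.ofReal_le_ofReal
        ((hsum n).trans (hmono (hmem 0).1 (hu (Nat.zero_le n)) (hmem n).2))

lemma mem_ball_iff (a b c : E3) :
    c ∈ Metric.closedBall (midpoint ℝ a b) (dist a b / 2) ↔ PP a b c ≤ 0 := by
  rw [Metric.mem_closedBall, dist_eq_norm, dist_comm, dist_eq_norm,
    ← sq_le_sq₀ (norm_nonneg _) (by positivity), norm_mid]
  constructor <;> intro h <;> linarith

/-- conclusion for an arc that is inside while the complementary arc is outside -/
lemma final_aux {γ : ℝ → E3} {L : ℝ} (hL : 0 < L) 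
    (hper : Function.Periodic γ L) {s t : ℝ} (hst : s < t) (htL : t < s + L)
    (h1 : ∀ x ∈ Ioo s t, PP (γ s) (γ t) (γ x) < 0)
    (h2 : ∀ x ∈ Ioo t (s + L), 0 < PP (γ s) (γ t) (γ x)) :
    Set.range γ ∩ Metric.closedBall (midpoint ℝ (γ s) (γ t)) (dist (γ s) (γ t) / 2) =
        γ '' Set.Icc s t := by
  ext c
  rw [mem_inter_iff, mem_ball_iff]
  constructor
  · rintro ⟨⟨x, rfl⟩, hx⟩
    obtain ⟨y, hy, hxy⟩ := hper.exists_mem_Ico hL x s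
    rw [hxy] at hx ⊢
    refine ⟨y, ⟨hy.1, ?_⟩, rfl⟩
    by_contra! hh
    linarith [h2 y ⟨hh, hy.2⟩]
  · rintro ⟨x, hx, rfl⟩
    refine ⟨⟨x, rfl⟩, ?_⟩
    rcases hx.1.eq_or_lt with rfl | hsx
    · simp [PP]
    rcases hx.2.eq_or_lt with rfl | hxt
    · simp [PP]
    exact (h1 x ⟨hsx, hxt⟩).le

/-- For a closed curve of unit thickness and `a, b` on the curve with `0 < |a-b| < 1`,
the closed ball with diameter `ab` meets the curve in a single subarc joining `a`
and `b`, of length at most `arcsin |a-b|`. -/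
theorem stmt14 (γ : ℝ → E3) (L : ℝ) (hL : 0 < L) (hcont : Continuous γ)
    (hper : Function.Periodic γ L) (hinj : Set.InjOn γ (Set.Ico 0 L))
    (hthick : ThickOne (Set.range γ))
    (a b : E3) (ha : a ∈ Set.range γ) (hb : b ∈ Set.range γ)
    (hd0 : 0 < dist a b) (hd1 : dist a b < 1) :
    ∃ s t : ℝ, s < t ∧ t - s ≤ L ∧
      ((γ s = a ∧ γ t = b) ∨ (γ s = b ∧ γ t = a)) ∧
      Set.range γ ∩ Metric.closedBall (midpoint ℝ a b) (dist a b / 2) =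
        γ '' Set.Icc s t ∧
      eVariationOn γ (Set.Icc s t) ≤ ENNReal.ofReal (Real.arcsin (dist a b)) := by
  obtain ⟨s, rfl⟩ := ha
  obtain ⟨x, rfl⟩ := hb
  obtain ⟨t, ht, hxt⟩ := hper.exists_mem_Ico hL x s
  rw [hxt] at hd0 hd1 ⊢
  have hst : s < t := by
    rcases ht.1.eq_or_lt with rfl | h
    · simp at hd0
    · exact h
  have htL := ht.2
  rcases dich hL hcont hper hinj hthick hst htL hd1 with h | h
  · refine ⟨s, t, hst, by linarith, Or.inl ⟨rfl, rfl⟩, final_aux hL hper hst htL h.1 h.2, ?_⟩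
    exact good_var hL hcont hper hinj hthick ⟨hst, htL, hd1, h.1⟩
  · have hsL : γ (s + L) = γ s := hper s
    have g1 : ∀ x ∈ Ioo t (s + L), PP (γ t) (γ (s + L)) (γ x) < 0 := by
      intro x hx
      rw [hsL, PP_comm]
      exact h.2 x hx
    have g2 : ∀ x ∈ Ioo (s + L) (t + L), 0 < PP (γ t) (γ (s + L)) (γ x) := by
      intro x hx
      rw [hsL, PP_comm, ← hper.sub_eq x]
      exact h.1 (x - L) ⟨by linarith [hx.1], by linarith [hx.2]⟩
    refine ⟨t, s + L, htL, by linarith, Or.inr ⟨rfl, hsL⟩, ?_, ?_⟩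
    · have := final_aux hL hper htL (by linarith) g1 g2
      rw [hsL, midpoint_comm, dist_comm] at this
      exact this
    · have := good_var hL hcont hper hinj hthick
        ⟨htL, by linarith, by rwa [hsL, dist_comm], g1⟩
      rw [hsL, dist_comm] at this
      exact this
end
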